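/- arXiv:1908.06146 — 4 statements merged into one kernel-verified Lean document; each statement's English description precedes it below -/
import Mathlib

section
/- Let θ > 0, κ ∈ ℝ, and let u : [0,θ] → (0,∞) be σ_κ-concave. Then for every r₀ ∈ (0,θ) and every r ∈ (r₀, θ) one has u(r) ≤ u(r₀)·cos_κ(r − r₀) + d⁺u(r₀)·sin_κ(r − r₀); in particular, the right-hand side u(r₀)·cos_κ(r − r₀) + d⁺u(r₀)·sin_κ(r − r₀) is strictly positive for all r ∈ (r₀, θ). -/
open Real Set Filter MeasureTheory Topology

/-- Generalized sine: the solution of `v'' + κ v = 0`, `v 0 = 0`, `v' 0 = 1`. -/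
noncomputable def sinK (κ r : ℝ) : ℝ :=
  if 0 < κ then Real.sin (Real.sqrt κ * r) / Real.sqrt κ
  else if κ = 0 then r
  else Real.sinh (Real.sqrt (-κ) * r) / Real.sqrt (-κ)

/-- Generalized cosine: the solution of `v'' + κ v = 0`, `v 0 = 1`, `v' 0 = 0`. -/
noncomputable def cosK (κ r : ℝ) : ℝ :=
  if 0 < κ then Real.cos (Real.sqrt κ * r)
  else if κ = 0 then 1
  else Real.cosh (Real.sqrt (-κ) * r)

/-- Distortion coefficient `σ_κ^{(t)}(θ)` (for `θ < π_κ`; `σ_κ^{(t)}(0) = t`). -/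
noncomputable def sigmaCoeff (κ t θ : ℝ) : ℝ :=
  if θ = 0 then t else sinK κ (t * θ) / sinK κ θ

/-- `u` is `σ_κ`-concave on `I ⊆ ℝ`.  The requirement `θ := |r₁ - r₀| < π_κ`
(encoded by `κ ≤ 0 ∨ |r₁ - r₀| < π/√κ`) expresses that the inequality with the
value `σ_κ^{(t)}(θ) = ∞` for `θ ≥ π_κ` cannot hold for a positive function. -/
def IsSigmaConcaveOn (κ : ℝ) (I : Set ℝ) (u : ℝ → ℝ) : Prop :=
  ∀ r₀ ∈ I, ∀ r₁ ∈ I,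
    (r₀ ≠ r₁ → (κ ≤ 0 ∨ |r₁ - r₀| < Real.pi / Real.sqrt κ)) ∧
    ∀ t ∈ Set.Icc (0:ℝ) 1,
      sigmaCoeff κ (1 - t) |r₁ - r₀| * u r₀ + sigmaCoeff κ t |r₁ - r₀| * u r₁
        ≤ u ((1 - t) * r₀ + t * r₁)

/-- Right derivative `d⁺u(r) = L`, i.e. `(u (r+h) - u r)/h → L` as `h ↓ 0`. -/
def HasRightDerivAt (u : ℝ → ℝ) (r L : ℝ) : Prop :=
  Filter.Tendsto (fun h : ℝ => (u (r + h) - u r) / h) (nhdsWithin 0 (Set.Ioi 0)) (nhds L)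

/-- Left derivative `d⁻u(r) = L`, i.e. `(u (r-h) - u r)/(-h) → L` as `h ↓ 0`. -/
def HasLeftDerivAt (u : ℝ → ℝ) (r L : ℝ) : Prop :=
  Filter.Tendsto (fun h : ℝ => (u (r - h) - u r) / (-h)) (nhdsWithin 0 (Set.Ioi 0)) (nhds L)

/-- The Jacobian function `J_{H,K,N}(r) = (cos_{K/(N-1)}(r) + H/(N-1) sin_{K/(N-1)}(r))₊^{N-1}`. -/
noncomputable def Jac (H K N r : ℝ) : ℝ :=
  (max (cosK (K/(N-1)) r + (H/(N-1)) * sinK (K/(N-1)) r) 0) ^ (N-1)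

theorem sinK_hasDerivAt (κ x : ℝ) : HasDerivAt (sinK κ) (cosK κ x) x := by
  rcases lt_trichotomy 0 κ with h | h | h
  · have hs : Real.sqrt κ ≠ 0 := (Real.sqrt_pos.2 h).ne'
    have h1 := (((hasDerivAt_id x).const_mul (Real.sqrt κ)).sin).div_const (Real.sqrt κ)
    have e1 : sinK κ = fun y => Real.sin (Real.sqrt κ * y) / Real.sqrt κ := by
      funext y; simp [sinK, h]
    rw [e1]
    have e2 : cosK κ x = Real.cos (Real.sqrt κ * x) * (Real.sqrt κ * 1) / Real.sqrt κ := by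
      simp only [cosK, h, if_true]
      field_simp
    rw [e2]
    exact h1
  · subst h
    have e1 : sinK 0 = fun y => y := by
      funext y; simp [sinK]
    rw [e1]
    simpa [cosK] using hasDerivAt_id' x
  · have hs : Real.sqrt (-κ) ≠ 0 := (Real.sqrt_pos.2 (by linarith)).ne'
    have h1 := (((hasDerivAt_id x).const_mul (Real.sqrt (-κ))).sinh).div_const (Real.sqrt (-κ))
    have e1 : sinK κ = fun y => Real.sinh (Real.sqrt (-κ) * y) / Real.sqrt (-κ) := by
      funext y; simp [sinK, h.not_gt, h.ne]
    rw [e1]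
    have e2 : cosK κ x = Real.cosh (Real.sqrt (-κ) * x) * (Real.sqrt (-κ) * 1)
        / Real.sqrt (-κ) := by
      simp only [cosK, h.not_gt, h.ne, if_false]
      field_simp
    rw [e2]
    exact h1

theorem sinK_pos (κ x : ℝ) (hx : 0 < x) (hk : κ ≤ 0 ∨ x < Real.pi / Real.sqrt κ) :
    0 < sinK κ x := by
  rcases lt_trichotomy 0 κ with h | h | h
  · have hs : 0 < Real.sqrt κ := Real.sqrt_pos.2 h
    have hx2 : x < Real.pi / Real.sqrt κ := hk.resolve_left (by linarith)
    rw [lt_div_iff₀ hs] at hx2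
    simp only [sinK, h, if_true]
    exact div_pos (Real.sin_pos_of_pos_of_lt_pi (by positivity) (by linarith)) hs
  · subst h
    simpa [sinK] using hx
  · have hs : 0 < Real.sqrt (-κ) := Real.sqrt_pos.2 (by linarith)
    simp only [sinK, h.not_gt, h.ne, if_false]
    exact div_pos (Real.sinh_pos_iff.2 (by positivity)) hs

theorem sinK_zero (κ : ℝ) : sinK κ 0 = 0 := by
  simp [sinK]

theorem cosK_zero (κ : ℝ) : cosK κ 0 = 1 := by
  simp [cosK]

/-- Lemma 4.1 / `lem:comparison`:
for a positive `σ_κ`-concave function `u` on `[0,θ]`, for `r₀ ∈ (0,θ)` and `r ∈ (r₀,θ)` we have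
`u(r) ≤ u(r₀) cos_κ(r - r₀) + d⁺u(r₀) sin_κ(r - r₀)`, and the right hand side is positive. -/
theorem sturm_comparison (θ κ : ℝ) (hθ : 0 < θ) (u : ℝ → ℝ)
    (hpos : ∀ r ∈ Set.Icc 0 θ, 0 < u r)
    (hconc : IsSigmaConcaveOn κ (Set.Icc 0 θ) u)
    (r₀ : ℝ) (hr₀ : r₀ ∈ Set.Ioo 0 θ)
    (d : ℝ) (hd : HasRightDerivAt u r₀ d)
    (r : ℝ) (hr : r ∈ Set.Ioo r₀ θ) :
    u r ≤ u r₀ * cosK κ (r - r₀) + d * sinK κ (r - r₀) ∧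
      0 < u r₀ * cosK κ (r - r₀) + d * sinK κ (r - r₀) := by
  obtain ⟨h0, h0θ⟩ := hr₀
  obtain ⟨hr1, hrθ⟩ := hr
  have m0 : r₀ ∈ Set.Icc 0 θ := ⟨h0.le, h0θ.le⟩
  have m1 : r ∈ Set.Icc 0 θ := ⟨by linarith, hrθ.le⟩
  have hL : 0 < r - r₀ := by linarith
  obtain ⟨hdiam, hc⟩ := hconc r₀ m0 r m1
  have hdiam := hdiam hr1.ne
  rw [abs_of_pos hL] at hdiam hc
  have hur := hpos r m1
  suffices h : u r ≤ u r₀ * cosK κ (r - r₀) + d * sinK κ (r - r₀) from ⟨h, hur.trans_le h⟩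
  generalize hLdef : r - r₀ = L at *
  have hs : 0 < sinK κ L := sinK_pos κ L hL hdiam
  have hg : HasDerivAt (fun h => sinK κ (L - h) / sinK κ L * u r₀ + sinK κ h / sinK κ L * u r)
      ((-cosK κ L) / sinK κ L * u r₀ + 1 / sinK κ L * u r) 0 := by
    have a1 : HasDerivAt (fun h => sinK κ (L - h)) (-cosK κ L) 0 := by
      have := HasDerivAt.comp_const_sub L 0 (f := sinK κ) (sinK_hasDerivAt κ (L - 0))
      simpa using this
    have a2 : HasDerivAt (sinK κ) 1 0 := by
      simpa [cosK_zero] using sinK_hasDerivAt κ 0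
    exact ((a1.div_const _).mul_const _).add ((a2.div_const _).mul_const _)
  have hle := le_of_tendsto_of_tendsto hg.tendsto_slope_zero_right hd (by
    filter_upwards [Ioo_mem_nhdsGT hL] with h hh
    have key := hc (h / L) ⟨by have := hh.1; positivity, by rw [div_le_one hL]; exact hh.2.le⟩
    have e1 : (1 - h / L) * L = L - h := by field_simp
    have e2 : h / L * L = h := by field_simp
    have e3 : (1 - h / L) * r₀ + h / L * r = r₀ + h := by
      have : r = r₀ + L := by linarith
      rw [this]; field_simp; ring
    rw [e3] at key
    simp only [sigmaCoeff, hL.ne', if_false, e1, e2] at key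
    simp only [zero_add, sub_zero, sinK_zero, zero_div, zero_mul, add_zero, div_self hs.ne', one_mul,
      smul_eq_mul]
    rw [inv_mul_eq_div]
    exact div_le_div_of_nonneg_right (by linarith) hh.1.le)
  have e : (-cosK κ L) / sinK κ L * u r₀ + 1 / sinK κ L * u r
      = (u r - u r₀ * cosK κ L) / sinK κ L := by field_simp; ring
  rw [e, div_le_iff₀ hs] at hle
  linarith
end

section
/- Let K > 0 and N > 1, set κ := K/(N−1), c := ∫₀^{π/√κ} sin_κ(r)^{N−1} dr, and define f : [0, π/√κ] → ℝ by f(t) := c^{−1}·∫₀^t sin_κ(r)^{N−1} dr. Then f is a continuous strictly increasing bijection from [0, π/√κ] onto [0,1]; moreover the function h := f' ∘ f^{−1} : [0,1] → [0,∞), where f'(t) = c^{−1}·sin_κ(t)^{N−1}, is differentiable on (0,1) with h'(v) = (N−1)·cos_κ(f^{−1}(v)) / sin_κ(f^{−1}(v)), and h' is nonincreasing on (0,1). -/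
open Real Set Filter MeasureTheory Topology

/-- for `K > 0`, `N > 1`, `κ = K/(N-1)` and
`f(t) = c⁻¹ ∫₀^t sin_κ(r)^{N-1} dr` (`c` the normalizing constant), `f` is a continuous
strictly increasing bijection of `[0, π/√κ]` onto `[0,1]`; the model isoperimetric profile
`h = f' ∘ f⁻¹` is differentiable on `(0,1)` with
`h'(v) = (N-1) cos_κ(f⁻¹ v) / sin_κ(f⁻¹ v)`, and `h'` is nonincreasing on `(0,1)`. -/
theorem model_isoperimetric_profile (K N : ℝ) (hK : 0 < K) (hN : 1 < N) :
    ∀ κ c : ℝ, κ = K / (N - 1) →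
      c = ∫ r in (0:ℝ)..(Real.pi / Real.sqrt κ), sinK κ r ^ (N - 1) →
      ∀ f : ℝ → ℝ,
        (f = fun t => c⁻¹ * ∫ r in (0:ℝ)..t, sinK κ r ^ (N - 1)) →
        (ContinuousOn f (Set.Icc 0 (Real.pi / Real.sqrt κ)) ∧
          StrictMonoOn f (Set.Icc 0 (Real.pi / Real.sqrt κ)) ∧
          f '' Set.Icc 0 (Real.pi / Real.sqrt κ) = Set.Icc 0 1) ∧
        -- for any inverse `g` of `f : [0, π/√κ] → [0,1]`, the profile
        -- `h = f' ∘ g`, with `f'(t) = c⁻¹ sin_κ(t)^{N-1}`, satisfies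
        -- `h'(v) = (N-1) cos_κ(g v)/sin_κ(g v)` on `(0,1)`, and `h'` is nonincreasing:
        ∀ g : ℝ → ℝ,
          (∀ v ∈ Set.Icc (0:ℝ) 1, g v ∈ Set.Icc 0 (Real.pi / Real.sqrt κ) ∧ f (g v) = v) →
          (∀ v ∈ Set.Ioo (0:ℝ) 1,
            HasDerivAt (fun w => c⁻¹ * sinK κ (g w) ^ (N - 1))
              ((N - 1) * cosK κ (g v) / sinK κ (g v)) v) ∧
          AntitoneOn (fun v => (N - 1) * cosK κ (g v) / sinK κ (g v)) (Set.Ioo 0 1) := by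
  intro κ c hκ hc f hf
  have hκ0 : 0 < κ := by rw [hκ]; exact div_pos hK (by linarith)
  have hs0 : 0 < √κ := Real.sqrt_pos.2 hκ0
  set T := Real.pi / √κ with hT
  have hT0 : 0 < T := div_pos Real.pi_pos hs0
  have hsin : ∀ r, sinK κ r = Real.sin (√κ * r) / √κ := fun r => by simp [sinK, hκ0]
  have hcos : ∀ r, cosK κ r = Real.cos (√κ * r) := fun r => by simp [cosK, hκ0]
  have hmem : ∀ r ∈ Ioo 0 T, 0 < √κ * r ∧ √κ * r < Real.pi := by
    intro r hr
    refine ⟨mul_pos hs0 hr.1, ?_⟩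
    have := (lt_div_iff₀ hs0).1 hr.2
    linarith [mul_comm r √κ]
  have hspos : ∀ r ∈ Ioo 0 T, 0 < sinK κ r := by
    intro r hr
    rw [hsin]
    exact div_pos (Real.sin_pos_of_pos_of_lt_pi (hmem r hr).1 (hmem r hr).2) hs0
  have hscont : Continuous (fun r => sinK κ r) := by
    simp only [hsin]; fun_prop
  have hFcont : Continuous (fun r => sinK κ r ^ (N - 1)) :=
    hscont.rpow_const (fun _ => Or.inr (by linarith))
  have hc0 : 0 < c := by
    rw [hc]
    exact intervalIntegral.intervalIntegral_pos_of_pos_on (hFcont.intervalIntegrable _ _)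
      (fun r hr => Real.rpow_pos_of_pos (hspos r hr) _) hT0
  have hfd : ∀ t, HasDerivAt f (c⁻¹ * sinK κ t ^ (N - 1)) t := by
    intro t
    rw [hf]
    exact (hFcont.integral_hasStrictDerivAt 0 t).hasDerivAt.const_mul _
  have hfc : Continuous f := continuous_iff_continuousAt.2 fun t => (hfd t).continuousAt
  have hfm : StrictMonoOn f (Icc 0 T) := by
    apply strictMonoOn_of_deriv_pos (convex_Icc _ _) hfc.continuousOn
    intro t ht
    rw [interior_Icc] at ht
    rw [(hfd t).deriv]
    exact mul_pos (inv_pos.2 hc0) (Real.rpow_pos_of_pos (hspos t ht) _)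
  have hf0 : f 0 = 0 := by simp [hf]
  have hf1 : f T = 1 := by
    rw [hf]; simp only; rw [← hc]; exact inv_mul_cancel₀ hc0.ne'
  have him : f '' Icc 0 T = Icc 0 1 := by
    rw [hfc.continuousOn.image_Icc_of_monotoneOn hT0.le hfm.monotoneOn, hf0, hf1]
  refine ⟨⟨hfc.continuousOn, hfm, him⟩, ?_⟩
  intro g hg
  have hgm : StrictMonoOn g (Icc 0 1) := by
    intro a ha b hb hab
    rw [← hfm.lt_iff_lt (hg a ha).1 (hg b hb).1, (hg a ha).2, (hg b hb).2]
    exact hab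
  have hgf : ∀ t ∈ Icc 0 T, g (f t) = t := by
    intro t ht
    have h1 : f t ∈ Icc (0:ℝ) 1 := him ▸ mem_image_of_mem f ht
    exact hfm.injOn (hg _ h1).1 ht (hg _ h1).2
  have hgI : ∀ v ∈ Ioo (0:ℝ) 1, g v ∈ Ioo 0 T := by
    intro v hv
    have h1 := hg v (Ioo_subset_Icc_self hv)
    refine ⟨lt_of_le_of_ne h1.1.1 ?_, lt_of_le_of_ne h1.1.2 ?_⟩
    · intro h
      have := h1.2
      rw [← h, hf0] at this
      exact hv.1.ne this
    · intro h
      have := h1.2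
      rw [h, hf1] at this
      exact hv.2.ne' this
  constructor
  · intro v hv
    have hgv := hgI v hv
    have hsp := hspos _ hgv
    have himg : g '' Icc 0 1 = Icc 0 T := by
      apply Subset.antisymm
      · rintro _ ⟨w, hw, rfl⟩
        exact (hg w hw).1
      · intro t ht
        exact ⟨f t, him ▸ mem_image_of_mem f ht, hgf t ht⟩
    have hgc : ContinuousAt g v := by
      apply hgm.continuousAt_of_image_mem_nhds (Icc_mem_nhds hv.1 hv.2)
      rw [himg]
      exact Icc_mem_nhds hgv.1 hgv.2
    have hne : c⁻¹ * sinK κ (g v) ^ (N - 1) ≠ 0 :=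
      (mul_pos (inv_pos.2 hc0) (Real.rpow_pos_of_pos hsp _)).ne'
    have hgd : HasDerivAt g (c⁻¹ * sinK κ (g v) ^ (N - 1))⁻¹ v := by
      apply HasDerivAt.of_local_left_inverse hgc (hfd (g v)) hne
      filter_upwards [Icc_mem_nhds hv.1 hv.2] with w hw
      exact (hg w hw).2
    have hsd : HasDerivAt (fun r => sinK κ r) (cosK κ (g v)) (g v) := by
      simp only [hsin, hcos]
      have h1 : HasDerivAt (fun r : ℝ => √κ * r) √κ (g v) := by
        simpa using (hasDerivAt_id (g v)).const_mul √κ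
      have h2 := (h1.sin).div_const √κ
      refine h2.congr_deriv ?_
      rw [mul_div_assoc, div_self hs0.ne', mul_one]
    have h3 := ((hsd.comp v hgd).rpow_const (p := N - 1) (Or.inl hsp.ne')).const_mul c⁻¹
    refine HasDerivAt.congr_deriv h3 ?_
    simp only [Function.comp]
    rw [Real.rpow_sub_one hsp.ne' (N - 1)]
    have := (Real.rpow_pos_of_pos hsp (N - 1)).ne'
    field_simp
  · intro a ha b hb hab
    have hga := hgI a ha
    have hgb := hgI b hb
    have hle : g a ≤ g b := hgm.monotoneOn (Ioo_subset_Icc_self ha) (Ioo_subset_Icc_self hb) hab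
    have hsa := hspos _ hga
    have hsb := hspos _ hgb
    simp only
    rw [div_le_div_iff₀ hsb hsa, mul_assoc, mul_assoc]
    apply mul_le_mul_of_nonneg_left _ (by linarith)
    rw [hsin, hsin, hcos, hcos, mul_div_assoc', mul_div_assoc']
    apply div_le_div_of_nonneg_right _ hs0.le
    have h1 : 0 ≤ Real.sin (√κ * g b - √κ * g a) := by
      apply Real.sin_nonneg_of_nonneg_of_le_pi
      · have := mul_le_mul_of_nonneg_left hle hs0.le
        linarith
      · linarith [(hmem _ hgb).2, (hmem _ hga).1]
    rw [Real.sin_sub] at h1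
    linarith
end

section
/- Let K > 0 and N > 1, set κ := K/(N−1), c := ∫₀^{π/√κ} sin_κ(r)^{N−1} dr, and define f : [0, π/√κ] → [0,1] by f(t) := c^{−1}·∫₀^t sin_κ(r)^{N−1} dr. Then the model isoperimetric profile h := f' ∘ f^{−1} : [0,1] → [0,∞), where f'(t) = c^{−1}·sin_κ(t)^{N−1}, is a concave function on [0,1]. -/
open Real Set Filter MeasureTheory Topology

/-- for `K > 0`, `N > 1`, `κ = K/(N-1)`,
`f(t) = c⁻¹ ∫₀^t sin_κ(r)^{N-1} dr` (with `c` the normalizing constant), the model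
isoperimetric profile `h = f' ∘ f⁻¹`, with `f'(t) = c⁻¹ sin_κ(t)^{N-1}`, is concave
on `[0,1]`. -/
theorem model_isoperimetric_profile_concave (K N : ℝ) (hK : 0 < K) (hN : 1 < N) :
    ∀ κ c : ℝ, κ = K / (N - 1) →
      c = ∫ r in (0:ℝ)..(Real.pi / Real.sqrt κ), sinK κ r ^ (N - 1) →
      ∀ f : ℝ → ℝ,
        (f = fun t => c⁻¹ * ∫ r in (0:ℝ)..t, sinK κ r ^ (N - 1)) →
        ∀ g : ℝ → ℝ,
          (∀ v ∈ Set.Icc (0:ℝ) 1, g v ∈ Set.Icc 0 (Real.pi / Real.sqrt κ) ∧ f (g v) = v) →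
          ConcaveOn ℝ (Set.Icc 0 1) (fun v => c⁻¹ * sinK κ (g v) ^ (N - 1)) := by
  intro κ c hκ hc f hf g hg
  have hp : 0 < N - 1 := by linarith
  have hκ0 : 0 < κ := by rw [hκ]; positivity
  have hq : 0 < Real.sqrt κ := Real.sqrt_pos.2 hκ0
  have hsK : ∀ r, sinK κ r = Real.sin (Real.sqrt κ * r) / Real.sqrt κ := by
    intro r; simp [sinK, hκ0]
  simp only [hsK] at hc hf ⊢
  clear hsK
  generalize N - 1 = p at *
  generalize Real.sqrt κ = q at *
  have hle : ∀ r, r ≤ Real.pi / q → q * r ≤ Real.pi := by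
    intro r hr
    rw [le_div_iff₀ hq] at hr
    linarith
  have hs0 : ∀ r ∈ Set.Icc 0 (Real.pi / q), 0 ≤ Real.sin (q * r) / q := by
    intro r hr
    exact div_nonneg (Real.sin_nonneg_of_nonneg_of_le_pi (mul_nonneg hq.le hr.1) (hle r hr.2)) hq.le
  have hs1 : ∀ r ∈ Set.Ioo 0 (Real.pi / q), 0 < Real.sin (q * r) := by
    intro r hr
    refine Real.sin_pos_of_pos_of_lt_pi (mul_pos hq hr.1) ?_
    have := hr.2
    rw [lt_div_iff₀ hq] at this
    linarith
  have hcont : Continuous (fun r => (Real.sin (q * r) / q) ^ p) := by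
    refine Continuous.rpow_const (by fun_prop) (fun _ => Or.inr hp.le)
  have hL : 0 ≤ Real.pi / q := div_nonneg Real.pi_pos.le hq.le
  have hc0 : 0 ≤ c := by
    rw [hc]
    exact intervalIntegral.integral_nonneg hL fun u hu => Real.rpow_nonneg (hs0 u hu) _
  have hcpos : 0 < c := by
    rcases hc0.eq_or_lt with h | h
    · have := (hg 1 (by simp)).2
      rw [hf, ← h] at this
      simp at this
    · exact h
  clear hc
  have hfd : ∀ t, HasDerivAt f (c⁻¹ * (Real.sin (q * t) / q) ^ p) t := by
    intro t
    rw [hf]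
    exact (intervalIntegral.integral_hasDerivAt_right (hcont.intervalIntegrable _ _)
      (hcont.stronglyMeasurableAtFilter _ _) hcont.continuousAt).const_mul _
  have hfc : Continuous f := continuous_iff_continuousAt.2 fun t => (hfd t).continuousAt
  have hmono : MonotoneOn f (Set.Icc 0 (Real.pi / q)) := by
    refine monotoneOn_of_hasDerivWithinAt_nonneg (convex_Icc _ _) hfc.continuousOn
      (fun x _ => (hfd x).hasDerivWithinAt) ?_
    intro x hx
    exact mul_nonneg (inv_nonneg.2 hc0) (Real.rpow_nonneg (hs0 x (interior_subset hx)) _)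
  have hlt : ∀ u ∈ Set.Icc (0:ℝ) 1, ∀ v ∈ Set.Icc (0:ℝ) 1, u < v → g u < g v := by
    intro u hu v hv huv
    by_contra hcon
    have := hmono (hg v hv).1 (hg u hu).1 (not_lt.1 hcon)
    rw [(hg u hu).2, (hg v hv).2] at this
    linarith
  have key : ∀ u ∈ Set.Icc (0:ℝ) 1, ∀ v ∈ Set.Icc (0:ℝ) 1, u < v →
      ∃ ξ ∈ Set.Ioo (g u) (g v), (c⁻¹ * (Real.sin (q * g v) / q) ^ p -
        c⁻¹ * (Real.sin (q * g u) / q) ^ p) / (v - u)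
        = p * q * (Real.cos (q * ξ) / Real.sin (q * ξ)) := by
    intro u hu v hv huv
    have hsub : ∀ x ∈ Set.Ioo (g u) (g v), x ∈ Set.Ioo 0 (Real.pi / q) := fun x hx =>
      ⟨(hg u hu).1.1.trans_lt hx.1, hx.2.trans_le (hg v hv).1.2⟩
    have hder : ∀ x ∈ Set.Ioo (g u) (g v),
        HasDerivAt (fun r => c⁻¹ * (Real.sin (q * r) / q) ^ p)
          (c⁻¹ * (Real.cos (q * x) * p * (Real.sin (q * x) / q) ^ (p - 1))) x := by
      intro x hx
      have h1 : HasDerivAt (fun r => Real.sin (q * r) / q) (Real.cos (q * x)) x := by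
        have h2 := (((hasDerivAt_id' x).const_mul q).sin).div_const q
        rwa [mul_one, mul_div_cancel_right₀ _ hq.ne'] at h2
      exact (h1.rpow_const (Or.inl (div_pos (hs1 x (hsub x hx)) hq).ne')).const_mul _
    obtain ⟨ξ, hξ, he⟩ := exists_ratio_hasDerivAt_eq_ratio_slope
      (fun r => c⁻¹ * (Real.sin (q * r) / q) ^ p) _ (hlt u hu v hv huv)
      (continuous_const.mul hcont).continuousOn hder f _ hfc.continuousOn (fun x _ => hfd x)
    refine ⟨ξ, hξ, ?_⟩
    have hs := hs1 ξ (hsub ξ hξ)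
    have hsq := div_pos hs hq
    rw [(hg u hu).2, (hg v hv).2, Real.rpow_sub_one hsq.ne'] at he
    have hP : 0 < (Real.sin (q * ξ) / q) ^ p := Real.rpow_pos_of_pos hsq _
    rw [div_eq_iff (sub_pos.2 huv).ne']
    have hci : 0 < c⁻¹ := inv_pos.2 hcpos
    refine mul_right_cancel₀ (mul_pos hci hP).ne' (Eq.trans he.symm ?_)
    generalize (Real.sin (q * ξ) / q) ^ p = P at *
    field_simp
  refine concaveOn_of_slope_anti_adjacent (convex_Icc _ _) ?_
  intro x y z hx hz hxy hyz
  have hy : y ∈ Set.Icc (0:ℝ) 1 := ⟨hx.1.trans hxy.le, hyz.le.trans hz.2⟩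
  obtain ⟨ξ, hξ, h1⟩ := key x hx y hy hxy
  obtain ⟨η, hη, h2⟩ := key y hy z hz hyz
  rw [h1, h2]
  refine mul_le_mul_of_nonneg_left ?_ (mul_pos hp hq).le
  have hξη : ξ < η := hξ.2.trans hη.1
  have h0 : 0 < ξ := (hg x hx).1.1.trans_lt hξ.1
  have hpi : η < Real.pi / q := hη.2.trans_le (hg z hz).1.2
  rw [div_le_div_iff₀ (hs1 η ⟨h0.trans hξη, hpi⟩) (hs1 ξ ⟨h0, hξη.trans hpi⟩)]
  have h3 : 0 ≤ Real.sin (q * η - q * ξ) := by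
    refine Real.sin_nonneg_of_nonneg_of_le_pi ?_ ?_
    · nlinarith
    · have := hle η hpi.le
      nlinarith
  rw [Real.sin_sub] at h3
  linarith
end

section
/- Let (X,d) be a geodesic metric space, i.e. for any x, y ∈ X there exists an isometric embedding γ : [0, d(x,y)] → X with γ(0) = x and γ(d(x,y)) = y. Let Ω ⊆ X be a closed set with Ω ≠ ∅ and Ω ≠ X, and define the signed distance function d_S(x) := dist(x, Ω) − dist(x, closure(X ∖ Ω)). Then d_S is 1-Lipschitz: |d_S(x) − d_S(y)| ≤ d(x,y) for all x, y ∈ X. -/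
open Real Set Filter MeasureTheory Topology

/-- in a geodesic metric space, the signed distance function
`d_S = dist(·, Ω) - dist(·, closure(Ωᶜ))` of the boundary of a nonempty closed proper
subset `Ω` is `1`-Lipschitz. -/
theorem signedDist_one_lipschitz {X : Type*} [MetricSpace X]
    (hgeo : ∀ x y : X, ∃ γ : ℝ → X, γ 0 = x ∧ γ (dist x y) = y ∧
      ∀ s ∈ Set.Icc 0 (dist x y), ∀ t ∈ Set.Icc 0 (dist x y), dist (γ s) (γ t) = |s - t|)
    (Ω : Set X) (hclosed : IsClosed Ω) (hne : Ω.Nonempty) (hproper : Ω ≠ Set.univ) :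
    ∀ x y : X,
      |(Metric.infDist x Ω - Metric.infDist x (closure Ωᶜ))
        - (Metric.infDist y Ω - Metric.infDist y (closure Ωᶜ))| ≤ dist x y := by
  have key : ∀ x ∈ Ω, ∀ y ∉ Ω,
      Metric.infDist x (closure Ωᶜ) + Metric.infDist y Ω ≤ dist x y := by
    intro x hx y hy
    obtain ⟨γ, h0, h1, hγ⟩ := hgeo x y
    have hL : (0:ℝ) ≤ dist x y := dist_nonneg
    have m0 : (0:ℝ) ∈ Set.Icc 0 (dist x y) := ⟨le_rfl, hL⟩
    have m1 : dist x y ∈ Set.Icc 0 (dist x y) := ⟨hL, le_rfl⟩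
    have hc : ContinuousOn γ (Set.Icc 0 (dist x y)) := by
      refine LipschitzOnWith.continuousOn (K := 1) ?_
      refine LipschitzOnWith.of_dist_le_mul ?_
      intro s hs t ht
      rw [hγ s hs t ht, Real.dist_eq]
      simp
    have hpre : IsPreconnected (γ '' Set.Icc 0 (dist x y)) := isPreconnected_Icc.image γ hc
    obtain ⟨z, ⟨t, ht, rfl⟩, hz⟩ : ((γ '' Set.Icc 0 (dist x y)) ∩ frontier Ω).Nonempty := by
      by_contra hcon
      rw [Set.not_nonempty_iff_eq_empty] at hcon
      have hsub : γ '' Set.Icc 0 (dist x y) ⊆ interior Ω ∪ Ωᶜ := by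
        intro z hz
        by_cases h : z ∈ Ω
        · left
          by_contra hi
          have : z ∈ (γ '' Set.Icc 0 (dist x y)) ∩ frontier Ω := ⟨hz, subset_closure h, hi⟩
          rw [hcon] at this
          exact this
        · exact Or.inr h
      have hx' : x ∈ γ '' Set.Icc 0 (dist x y) := ⟨0, m0, h0⟩
      have hy' : y ∈ γ '' Set.Icc 0 (dist x y) := ⟨_, m1, h1⟩
      have hxi : x ∈ interior Ω := (hsub hx').resolve_right (fun h => h hx)
      obtain ⟨w, _, hw1, hw2⟩ := hpre _ _ isOpen_interior hclosed.isOpen_compl hsub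
        ⟨x, hx', hxi⟩ ⟨y, hy', hy⟩
      exact hw2 (interior_subset hw1)
    rw [frontier_eq_closure_inter_closure, hclosed.closure_eq] at hz
    have a1 := Metric.infDist_le_dist_of_mem (x := x) hz.2
    have a2 := Metric.infDist_le_dist_of_mem (x := y) hz.1
    have d1 := hγ 0 m0 t ht
    have d2 := hγ _ m1 t ht
    rw [h0, zero_sub, abs_neg, abs_of_nonneg ht.1] at d1
    rw [h1, abs_of_nonneg (sub_nonneg.2 ht.2)] at d2
    linarith
  have hin : ∀ x ∈ Ω, Metric.infDist x Ω = 0 := fun x hx => Metric.infDist_zero_of_mem hx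
  have hout : ∀ x ∉ Ω, Metric.infDist x (closure Ωᶜ) = 0 :=
    fun x hx => Metric.infDist_zero_of_mem (subset_closure hx)
  intro x y
  have f1 := Metric.infDist_le_infDist_add_dist (s := Ω) (x := x) (y := y)
  have f2 := Metric.infDist_le_infDist_add_dist (s := Ω) (x := y) (y := x)
  have g1 := Metric.infDist_le_infDist_add_dist (s := closure Ωᶜ) (x := x) (y := y)
  have g2 := Metric.infDist_le_infDist_add_dist (s := closure Ωᶜ) (x := y) (y := x)
  have p1 := Metric.infDist_nonneg (s := Ω) (x := x)
  have p2 := Metric.infDist_nonneg (s := Ω) (x := y)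
  have q1 := Metric.infDist_nonneg (s := closure Ωᶜ) (x := x)
  have q2 := Metric.infDist_nonneg (s := closure Ωᶜ) (x := y)
  rw [dist_comm y x] at f2 g2
  rw [abs_le]
  by_cases hx : x ∈ Ω <;> by_cases hy : y ∈ Ω
  · have := hin x hx
    have := hin y hy
    constructor <;> linarith
  · have := hin x hx
    have := hout y hy
    have := key x hx y hy
    constructor <;> linarith
  · have := hout x hx
    have := hin y hy
    have := key y hy x hx
    rw [dist_comm y x] at this
    constructor <;> linarith
  · have := hout x hx
    have := hout y hy
    constructor <;> linarith
end
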